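/- arXiv:2309.02890 — 2 statements merged into one kernel-verified Lean document; each statement's English description precedes it below -/
import Mathlib

section
/- For every integer k ≥ 1, the ideal generated by t₀^k + t₁^k + t₂^k in the Laurent polynomial ring ℂ[t₀^{±1}, t₁^{±1}, t₂^{±1}] (i.e. the group algebra AddMonoidAlgebra ℂ (Fin 3 →₀ ℤ), where t_j denotes the basis monomial corresponding to the j-th standard basis vector of ℤ^3) is a prime ideal. -/
open MvPolynomial in
lemma fermat_aux (k : ℕ) (hk : 1 ≤ k) :
    Irreducible ((Polynomial.X ^ k + Polynomial.C (X 0 ^ k + X 1 ^ k) :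
      Polynomial (MvPolynomial (Fin 2) ℂ))) := by
  obtain ⟨z, hz⟩ := IsAlgClosed.exists_pow_nat_eq (-1 : ℂ) (n := k) (by omega)
  have hz0 : z ≠ 0 := by
    rintro rfl
    rw [zero_pow (by omega)] at hz
    norm_num at hz
  set p : MvPolynomial (Fin 2) ℂ := X 0 - C z * X 1 with hp
  have hpi : Irreducible p := by
    have h := irreducible_mul_X_add (1 : MvPolynomial (Fin 2) ℂ) (- (C z * X 1)) 0 one_ne_zero
      (by simp) (by
        rw [vars_neg]
        intro h
        have := vars_mul _ _ h
        simp [vars_X] at this) isRelPrime_one_left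
    rw [one_mul, ← sub_eq_add_neg] at h
    exact h
  have hpp : Prime p := hpi.prime
  have hdeg : (Polynomial.X ^ k + Polynomial.C (X 0 ^ k + X 1 ^ k) :
      Polynomial (MvPolynomial (Fin 2) ℂ)).degree = k :=
    Polynomial.degree_X_pow_add_C (by omega) _
  have hmon : (Polynomial.X ^ k + Polynomial.C (X 0 ^ k + X 1 ^ k) :
      Polynomial (MvPolynomial (Fin 2) ℂ)).Monic :=
    Polynomial.monic_X_pow_add_C _ (by omega)
  have hmem : (X 0 ^ k + X 1 ^ k : MvPolynomial (Fin 2) ℂ) ∈ Ideal.span {p} := by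
    rw [Ideal.mem_span_singleton]
    have := sub_dvd_pow_sub_pow (X 0 : MvPolynomial (Fin 2) ℂ) (C z * X 1) k
    rw [mul_pow, ← C_pow, hz] at this
    simpa using this
  refine Polynomial.irreducible_of_eisenstein_criterion (P := Ideal.span {p})
    ((Ideal.span_singleton_prime hpp.ne_zero).2 hpp) ?_ ?_ ?_ ?_ hmon.isPrimitive
  · rw [hmon.leadingCoeff, Ideal.mem_span_singleton]
    exact fun h => hpp.not_isUnit (isUnit_of_dvd_one h)
  · intro n hn
    rw [hdeg] at hn
    have hn' : n < k := by exact_mod_cast hn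
    rw [Polynomial.coeff_add, Polynomial.coeff_X_pow, if_neg (by omega), Polynomial.coeff_C, zero_add]
    split_ifs
    · exact hmem
    · exact Ideal.zero_mem _
  · rw [hdeg]; exact_mod_cast hk
  · rw [Ideal.span_singleton_pow, Ideal.mem_span_singleton, Polynomial.coeff_add,
      Polynomial.coeff_X_pow, if_neg (by omega), Polynomial.coeff_C_zero, zero_add]
    rintro ⟨g, hg⟩
    have h1 := congrArg (fun q => eval ![z, 1] (pderiv 0 q)) hg
    simp [hp, pderiv_X, Derivation.leibniz_pow, Derivation.leibniz] at h1
    rcases h1 with h1 | h1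
    · omega
    · exact hz0 h1.1

open MvPolynomial in
lemma fermat_prime (k : ℕ) (hk : 1 ≤ k) :
    Prime (X 0 ^ k + X 1 ^ k + X 2 ^ k : MvPolynomial (Fin 3) ℂ) := by
  rw [← MulEquiv.prime_iff (finSuccEquiv ℂ 2).toMulEquiv]
  have h := (fermat_aux k hk).prime
  convert h using 1
  have h1 : finSuccEquiv ℂ 2 (X 1) = Polynomial.C (X 0) := finSuccEquiv_X_succ (j := 0)
  have h2 : finSuccEquiv ℂ 2 (X 2) = Polynomial.C (X 1) := finSuccEquiv_X_succ (j := 1)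
  change finSuccEquiv ℂ 2 _ = _
  simp [h1, h2, finSuccEquiv_X_zero, add_assoc]

/-- The inclusion of exponents. -/
noncomputable def expIncl : (Fin 3 →₀ ℕ) →+ (Fin 3 →₀ ℤ) :=
  Finsupp.mapRange.addMonoidHom (Nat.castAddMonoidHom ℤ)

/-- The inclusion of polynomials into Laurent polynomials. -/
noncomputable def polyIncl : MvPolynomial (Fin 3) ℂ →+* AddMonoidAlgebra ℂ (Fin 3 →₀ ℤ) :=
  AddMonoidAlgebra.mapDomainRingHom ℂ expIncl

lemma expIncl_injective : Function.Injective expIncl :=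
  Finsupp.mapRange_injective _ (by simp) Nat.cast_injective

lemma polyIncl_injective : Function.Injective polyIncl :=
  AddMonoidAlgebra.mapDomain_injective expIncl_injective

lemma polyIncl_monomial (d : Fin 3 →₀ ℕ) (c : ℂ) :
    polyIncl (MvPolynomial.monomial d c) = AddMonoidAlgebra.single (expIncl d) c :=
  AddMonoidAlgebra.mapDomain_single

lemma polyIncl_X (j : Fin 3) :
    polyIncl (MvPolynomial.X j) = AddMonoidAlgebra.single (Finsupp.single j 1) 1 := by
  rw [MvPolynomial.X, polyIncl_monomial]
  simp [expIncl]

/-- The polynomial `X₀ X₁ X₂` -/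
noncomputable def mon3 : MvPolynomial (Fin 3) ℂ :=
  MvPolynomial.monomial (Finsupp.equivFunOnFinite.symm fun _ => 1) 1

lemma exists_clear (a : AddMonoidAlgebra ℂ (Fin 3 →₀ ℤ)) :
    ∃ (n : ℕ) (p : MvPolynomial (Fin 3) ℂ), polyIncl (mon3 ^ n) * a = polyIncl p := by
  induction a using AddMonoidAlgebra.induction_linear with
  | zero => exact ⟨0, 0, by simp⟩
  | add f g hf hg =>
    obtain ⟨n, p, hp⟩ := hf
    obtain ⟨m, q, hq⟩ := hg
    refine ⟨n + m, mon3 ^ m * p + mon3 ^ n * q, ?_⟩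
    rw [map_add, map_mul, map_mul, ← hp, ← hq, pow_add, map_mul]
    ring
  | single d c =>
    refine ⟨∑ i, (d i).natAbs, MvPolynomial.monomial (Finsupp.equivFunOnFinite.symm
      fun i => (d i + ((∑ i, (d i).natAbs : ℕ) : ℤ)).toNat) c, ?_⟩
    rw [mon3, MvPolynomial.monomial_pow, polyIncl_monomial, polyIncl_monomial,
      AddMonoidAlgebra.single_mul_single]
    congr 1
    · ext i
      have : (d i).natAbs ≤ ∑ i, (d i).natAbs :=
        Finset.single_le_sum (f := fun i => (d i).natAbs) (by simp) (Finset.mem_univ i)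
      simp only [expIncl, Finsupp.mapRange.addMonoidHom_apply, Finsupp.add_apply,
        Finsupp.mapRange_apply, Finsupp.smul_apply, Finsupp.equivFunOnFinite_symm_apply_apply,
        Nat.coe_castAddMonoidHom, smul_eq_mul, mul_one]
      omega
    · simp

lemma isUnit_mon3 (n : ℕ) : IsUnit (polyIncl (mon3 ^ n)) := by
  rw [map_pow]
  apply IsUnit.pow
  rw [mon3, polyIncl_monomial]
  generalize expIncl _ = e
  refine IsUnit.of_mul_eq_one (AddMonoidAlgebra.single (- e) 1) ?_
  rw [AddMonoidAlgebra.single_mul_single, add_neg_cancel, one_mul, AddMonoidAlgebra.one_def]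

open MvPolynomial in
lemma not_dvd_mon3 (k : ℕ) (hk : 1 ≤ k) (n : ℕ) :
    ¬ (X 0 ^ k + X 1 ^ k + X 2 ^ k : MvPolynomial (Fin 3) ℂ) ∣ mon3 ^ n := by
  rintro ⟨g, hg⟩
  obtain ⟨z, hz⟩ := IsAlgClosed.exists_pow_nat_eq (-2 : ℂ) (n := k) (by omega)
  have hz0 : z ≠ 0 := by
    rintro rfl
    rw [zero_pow (by omega)] at hz
    norm_num at hz
  have h := congrArg (eval ![1, 1, z]) hg
  have e : (1 + 1 + -2 : ℂ) = 0 := by norm_num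
  simp [mon3, hz, e, eval_monomial, Finsupp.prod_fintype, Fin.prod_univ_three, hz0] at h


/-- For every integer `k ≥ 1`, the ideal generated by `t₀^k + t₁^k + t₂^k` in the
Laurent polynomial ring `ℂ[t₀^{±1}, t₁^{±1}, t₂^{±1}]`, realized as the group algebra
`AddMonoidAlgebra ℂ (Fin 3 →₀ ℤ)`, is prime; here `t j` is the basis monomial
corresponding to the `j`-th standard basis vector of `ℤ³`. -/
theorem stmt3 (k : ℕ) (hk : 1 ≤ k) :
    (Ideal.span
      { AddMonoidAlgebra.single (Finsupp.single (0 : Fin 3) (1 : ℤ)) (1 : ℂ) ^ k +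
        AddMonoidAlgebra.single (Finsupp.single (1 : Fin 3) (1 : ℤ)) (1 : ℂ) ^ k +
        AddMonoidAlgebra.single (Finsupp.single (2 : Fin 3) (1 : ℤ)) (1 : ℂ) ^ k } :
      Ideal (AddMonoidAlgebra ℂ (Fin 3 →₀ ℤ))).IsPrime := by
  simp only [← polyIncl_X, ← map_pow, ← map_add]
  have hF := fermat_prime k hk
  have hnd := not_dvd_mon3 k hk
  generalize (MvPolynomial.X 0 ^ k + MvPolynomial.X 1 ^ k + MvPolynomial.X 2 ^ k :
    MvPolynomial (Fin 3) ℂ) = F at hF hnd ⊢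
  have key : ∀ p : MvPolynomial (Fin 3) ℂ, polyIncl F ∣ polyIncl p → F ∣ p := by
    rintro p ⟨c, hc⟩
    obtain ⟨n, r, hr⟩ := exists_clear c
    have : mon3 ^ n * p = F * r := by
      apply polyIncl_injective
      rw [map_mul, map_mul, hc, ← hr]
      ring
    exact (hF.dvd_or_dvd ⟨r, this⟩).resolve_left (hnd n)
  have hne : polyIncl F ≠ 0 := by
    rw [Ne, map_eq_zero_iff _ polyIncl_injective]
    exact hF.ne_zero
  rw [Ideal.span_singleton_prime hne]
  refine ⟨hne, fun h => hF.not_isUnit (isUnit_of_dvd_one (key 1 h.dvd)), fun a b hab => ?_⟩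
  obtain ⟨n, p, hp⟩ := exists_clear a
  obtain ⟨m, q, hq⟩ := exists_clear b
  have : F ∣ p * q := by
    apply key
    rw [map_mul, ← hp, ← hq, mul_mul_mul_comm]
    exact hab.mul_left _
  rcases hF.dvd_or_dvd this with h | h
  · left
    rw [← (isUnit_mon3 n).dvd_mul_left, hp]
    exact map_dvd _ h
  · right
    rw [← (isUnit_mon3 m).dvd_mul_left, hq]
    exact map_dvd _ h
end

section
/- Let R be an E-ring and J an E-ideal of R. Then J is E-radical (i.e. J = Erad J) if and only if for all a, b₁, b₂ ∈ R, if b₁·b₂ ∈ J and a ∈ √[E](J ∪ {b₁}) ∩ √[E](J ∪ {b₂}), then a ∈ J. -/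
/-- An E-ideal of an E-ring `(R, E)`: an ideal `I` such that `a ∈ I` implies `E a - 1 ∈ I`. -/
def IsEIdeal {R : Type*} [CommRing R] (E : R → R) (I : Ideal R) : Prop :=
  ∀ a ∈ I, E a - 1 ∈ I

/-- `Erad E X` is the intersection of all prime E-ideals containing `X`
(all of `R` if there are none). -/
def Erad {R : Type*} [CommRing R] (E : R → R) (X : Set R) : Set R :=
  ⋂ I ∈ {I : Ideal R | I.IsPrime ∧ IsEIdeal E I ∧ X ⊆ ↑I}, (I : Set R)

/-- `eSpan E X` is the smallest E-ideal containing `X` (as a set: the intersection of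
all E-ideals containing `X`). -/
def eSpan {R : Type*} [CommRing R] (E : R → R) (X : Set R) : Set R :=
  ⋂ I ∈ {I : Ideal R | IsEIdeal E I ∧ X ⊆ ↑I}, (I : Set R)

/-- The operators `√[n]` on subsets of `R`, defined inductively:
`√[0] X` is the smallest E-ideal containing `X`, and
`√[n+1] X = √[n] {a | ∃ b₁ b₂, b₁ * b₂ ∈ √[n] X ∧ a ∈ √[n] (X ∪ {b₁}) ∩ √[n] (X ∪ {b₂})}`. -/
def nRad {R : Type*} [CommRing R] (E : R → R) : ℕ → Set R → Set R
  | 0, X => eSpan E X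
  | n + 1, X => nRad E n {a | ∃ b₁ b₂ : R, b₁ * b₂ ∈ nRad E n X ∧
      a ∈ nRad E n (X ∪ {b₁}) ∩ nRad E n (X ∪ {b₂})}

/-- `√[E] X = ⋃ n, √[n] X`. -/
def eRad {R : Type*} [CommRing R] (E : R → R) (X : Set R) : Set R :=
  ⋃ n : ℕ, nRad E n X

theorem subset_eSpan' {R : Type*} [CommRing R] (E : R → R) (X : Set R) : X ⊆ eSpan E X := by
  intro x hx
  simp only [eSpan, Set.mem_iInter]
  intro I hI
  exact hI.2 hx

theorem eSpan_min {R : Type*} [CommRing R] (E : R → R) (X : Set R) (I : Ideal R)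
    (hI : IsEIdeal E I) (hX : X ⊆ ↑I) : eSpan E X ⊆ ↑I := by
  intro x hx
  simp only [eSpan, Set.mem_iInter] at hx
  exact hx I ⟨hI, hX⟩

theorem nRad_ideal {R : Type*} [CommRing R] (E : R → R) (n : ℕ) : ∀ X : Set R,
    ∃ I : Ideal R, IsEIdeal E I ∧ (I : Set R) = nRad E n X := by
  induction n with
  | zero =>
    intro X
    refine ⟨sInf {I : Ideal R | IsEIdeal E I ∧ X ⊆ ↑I}, ?_, ?_⟩
    · intro a ha
      rw [Submodule.mem_sInf] at ha ⊢
      intro I hI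
      exact hI.1 a (ha I hI)
    · rw [Submodule.coe_sInf]; rfl
  | succ n ih => intro X; exact ih _

theorem nRad_mono {R : Type*} [CommRing R] (E : R → R) (n : ℕ) : ∀ X Y : Set R, X ⊆ Y →
    nRad E n X ⊆ nRad E n Y := by
  induction n with
  | zero =>
    intro X Y h x hx
    simp only [nRad, eSpan, Set.mem_iInter] at hx ⊢
    intro I hI
    exact hx I ⟨hI.1, h.trans hI.2⟩
  | succ n ih =>
    intro X Y h
    apply ih
    rintro a ⟨b₁, b₂, hb, h1, h2⟩
    exact ⟨b₁, b₂, ih _ _ h hb, ih _ _ (Set.union_subset_union_left _ h) h1,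
      ih _ _ (Set.union_subset_union_left _ h) h2⟩

theorem nRad_zero_mem {R : Type*} [CommRing R] (E : R → R) (n : ℕ) (X : Set R) :
    (0 : R) ∈ nRad E n X := by
  obtain ⟨I, -, h⟩ := nRad_ideal E n X
  rw [← h]; exact I.zero_mem

theorem nRad_one_mem {R : Type*} [CommRing R] (E : R → R) (n : ℕ) (X : Set R)
    (h1 : (1 : R) ∈ nRad E n X) (a : R) : a ∈ nRad E n X := by
  obtain ⟨I, -, h⟩ := nRad_ideal E n X
  rw [← h] at h1 ⊢
  have := I.mul_mem_left a h1
  simpa using this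

theorem subset_nRad {R : Type*} [CommRing R] (E : R → R) (n : ℕ) : ∀ X : Set R,
    X ⊆ nRad E n X := by
  induction n with
  | zero => exact subset_eSpan' E
  | succ n ih =>
    intro X x hx
    refine ih _ ⟨0, 0, ?_, ih _ (Or.inl hx), ih _ (Or.inl hx)⟩
    rw [mul_zero]; exact nRad_zero_mem E n X

theorem nRad_succ {R : Type*} [CommRing R] (E : R → R) (n : ℕ) (X : Set R) :
    nRad E n X ⊆ nRad E (n + 1) X := by
  apply nRad_mono
  intro x hx
  refine ⟨0, 0, ?_, subset_nRad _ _ _ (Or.inl hx), subset_nRad _ _ _ (Or.inl hx)⟩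
  rw [mul_zero]; exact nRad_zero_mem E n X

theorem nRad_le {R : Type*} [CommRing R] (E : R → R) {n m : ℕ} (h : n ≤ m) (X : Set R) :
    nRad E n X ⊆ nRad E m X :=
  (monotone_nat_of_le_succ (f := fun n => nRad E n X) (fun n => nRad_succ E n X)) h

theorem nRad_fin {R : Type*} [CommRing R] (E : R → R) (n : ℕ) : ∀ (X : Set R) (a : R),
    a ∈ nRad E n X → ∃ F : Set R, F.Finite ∧ F ⊆ X ∧ a ∈ nRad E n F := by
  induction n with
  | zero =>
    intro X a ha
    let I : Ideal R :=
      { carrier := {a | ∃ F : Set R, F.Finite ∧ F ⊆ X ∧ a ∈ nRad E 0 F}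
        zero_mem' := ⟨∅, Set.finite_empty, Set.empty_subset _, nRad_zero_mem _ _ _⟩
        add_mem' := by
          rintro x y ⟨F, hF, hFX, hx⟩ ⟨G, hG, hGX, hy⟩
          refine ⟨F ∪ G, hF.union hG, Set.union_subset hFX hGX, ?_⟩
          have hx' := nRad_mono E 0 F (F ∪ G) Set.subset_union_left hx
          have hy' := nRad_mono E 0 G (F ∪ G) Set.subset_union_right hy
          obtain ⟨I, -, h⟩ := nRad_ideal E 0 (F ∪ G)
          rw [← h] at hx' hy' ⊢
          exact I.add_mem hx' hy'
        smul_mem' := by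
          rintro c x ⟨F, hF, hFX, hx⟩
          refine ⟨F, hF, hFX, ?_⟩
          obtain ⟨I, -, h⟩ := nRad_ideal E 0 F
          rw [← h] at hx ⊢
          exact I.mul_mem_left c hx }
    refine eSpan_min E X I ?_ ?_ ha
    · rintro x ⟨F, hF, hFX, hx⟩
      refine ⟨F, hF, hFX, ?_⟩
      obtain ⟨I, hI, h⟩ := nRad_ideal E 0 F
      rw [← h] at hx ⊢
      exact hI x hx
    · intro x hx
      exact ⟨{x}, Set.finite_singleton x, by simpa using hx, subset_nRad _ _ _ rfl⟩
  | succ n ih =>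
    intro X a ha
    obtain ⟨G, hG, hGS, haG⟩ := ih _ a ha
    have key : ∀ g ∈ G, ∃ F : Set R, F.Finite ∧ F ⊆ X ∧ ∃ b₁ b₂ : R, b₁ * b₂ ∈ nRad E n F ∧
        g ∈ nRad E n (F ∪ {b₁}) ∩ nRad E n (F ∪ {b₂}) := by
      intro g hg
      obtain ⟨b₁, b₂, hb, h1, h2⟩ := hGS hg
      obtain ⟨F0, f0, s0, m0⟩ := ih _ _ hb
      obtain ⟨F1, f1, s1, m1⟩ := ih _ _ h1
      obtain ⟨F2, f2, s2, m2⟩ := ih _ _ h2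
      refine ⟨F0 ∪ (F1 ∩ X) ∪ (F2 ∩ X),
        (f0.union (f1.inter_of_left X)).union (f2.inter_of_left X), ?_, b₁, b₂, ?_, ?_, ?_⟩
      · rintro x ((h | h) | h)
        · exact s0 h
        · exact h.2
        · exact h.2
      · exact nRad_mono E n _ _ (fun x hx => Or.inl (Or.inl hx)) m0
      · refine nRad_mono E n _ _ (fun x hx => ?_) m1
        rcases s1 hx with h | h
        · exact Or.inl (Or.inl (Or.inr ⟨hx, h⟩))
        · exact Or.inr h
      · refine nRad_mono E n _ _ (fun x hx => ?_) m2
        rcases s2 hx with h | h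
        · exact Or.inl (Or.inr ⟨hx, h⟩)
        · exact Or.inr h
    choose! F hFf hFX hF using key
    refine ⟨⋃ g ∈ G, F g, hG.biUnion hFf, Set.iUnion₂_subset hFX, ?_⟩
    refine nRad_mono E n _ _ ?_ haG
    intro g hg
    obtain ⟨b₁, b₂, hb, h1, h2⟩ := hF g hg
    have hs : F g ⊆ ⋃ g ∈ G, F g := Set.subset_biUnion_of_mem hg
    exact ⟨b₁, b₂, nRad_mono E n _ _ hs hb,
      nRad_mono E n _ _ (Set.union_subset_union_left _ hs) h1,
      nRad_mono E n _ _ (Set.union_subset_union_left _ hs) h2⟩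

theorem nRad_subset_prime {R : Type*} [CommRing R] (E : R → R) (P : Ideal R) (hP : P.IsPrime)
    (hE : IsEIdeal E P) (n : ℕ) : ∀ X : Set R, X ⊆ ↑P → nRad E n X ⊆ ↑P := by
  induction n with
  | zero => intro X hX; exact eSpan_min E X P hE hX
  | succ n ih =>
    intro X hX
    apply ih
    rintro a ⟨b₁, b₂, hb, h1, h2⟩
    rcases hP.mem_or_mem (ih X hX hb) with h | h
    · exact ih _ (Set.union_subset hX (by simpa using h)) h1
    · exact ih _ (Set.union_subset hX (by simpa using h)) h2

theorem exists_prime {R : Type*} [CommRing R] (E : R → R) (X : Set R) (a : R)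
    (ha : a ∉ eRad E X) : ∃ P : Ideal R, P.IsPrime ∧ IsEIdeal E P ∧ X ⊆ ↑P ∧ a ∉ P := by
  obtain ⟨P, hXP, hmax⟩ := zorn_subset_nonempty {Y : Set R | a ∉ eRad E Y} (by
    intro c hc hchain hne
    refine ⟨⋃₀ c, ?_, fun s hs => Set.subset_sUnion_of_mem hs⟩
    intro h
    obtain ⟨n, hn⟩ := Set.mem_iUnion.1 h
    obtain ⟨F, hF, hFc, haF⟩ := nRad_fin E n _ _ hn
    obtain ⟨Y, hY, hFY⟩ := hchain.directedOn.exists_mem_subset_of_finite_of_subset_sUnion hne hF hFc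
    exact hc hY (Set.mem_iUnion.2 ⟨n, nRad_mono E n _ _ hFY haF⟩)) X ha
  have hP : a ∉ eRad E P := hmax.prop
  have big : ∀ b, b ∉ P → ∃ n, a ∈ nRad E n (P ∪ {b}) := by
    intro b hb
    by_contra hcon
    have h' : a ∉ eRad E (P ∪ {b}) := fun h => hcon (Set.mem_iUnion.1 h)
    exact hb (hmax.le_of_ge h' Set.subset_union_left (Or.inr rfl))
  have mul : ∀ n b₁ b₂, b₁ * b₂ ∈ nRad E n P → b₁ ∉ P → b₂ ∉ P → False := by
    intro n b₁ b₂ hb h1 h2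
    obtain ⟨k, hk⟩ := big b₁ h1
    obtain ⟨l, hl⟩ := big b₂ h2
    apply hP
    refine Set.mem_iUnion.2 ⟨(n + k + l) + 1, subset_nRad E (n + k + l) _ ⟨b₁, b₂, ?_, ?_, ?_⟩⟩
    · exact nRad_le E (by omega) _ hb
    · exact nRad_le E (by omega) _ hk
    · exact nRad_le E (by omega) _ hl
  have one : (1 : R) ∉ P := fun h =>
    hP (Set.mem_iUnion.2 ⟨0, nRad_one_mem E 0 P (subset_nRad _ _ _ h) a⟩)
  obtain ⟨I, hI, hIP⟩ := nRad_ideal E 0 P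
  have hIP' : (I : Set R) = P := by
    apply Set.Subset.antisymm
    · intro c hc
      by_contra hcP
      rw [hIP] at hc
      exact mul 0 c 1 (by simpa using hc) hcP one
    · rw [hIP]; exact subset_nRad _ _ _
  subst hIP'
  refine ⟨I, ⟨?_, ?_⟩, hI, hXP, ?_⟩
  · intro h; exact one (by rw [h]; trivial)
  · intro x y hxy
    by_contra hcon
    push Not at hcon
    exact mul 0 x y (subset_nRad _ _ _ hxy) hcon.1 hcon.2
  · intro h; exact hP (Set.mem_iUnion.2 ⟨0, subset_nRad _ _ _ h⟩)

/-- An E-ideal `J` is E-radical (`J = Erad J`) iff for all `a, b₁, b₂ ∈ R`, whenever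
`b₁ * b₂ ∈ J` and `a ∈ √[E](J ∪ {b₁}) ∩ √[E](J ∪ {b₂})`, we have `a ∈ J`. -/
theorem stmt8 {R : Type*} [CommRing R] (E : R → R)
    (hE0 : E 0 = 1) (hEadd : ∀ x y : R, E (x + y) = E x * E y)
    (J : Ideal R) (hJ : IsEIdeal E J) :
    (J : Set R) = Erad E (J : Set R) ↔
      ∀ a b₁ b₂ : R, b₁ * b₂ ∈ J →
        a ∈ eRad E ((J : Set R) ∪ {b₁}) ∩ eRad E ((J : Set R) ∪ {b₂}) → a ∈ J := by
  constructor
  · intro h a b₁ b₂ hb ⟨h1, h2⟩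
    rw [← SetLike.mem_coe, h]
    simp only [Erad, Set.mem_iInter]
    rintro P ⟨hP, hPE, hJP⟩
    obtain ⟨n, hn⟩ := Set.mem_iUnion.1 h1
    obtain ⟨m, hm⟩ := Set.mem_iUnion.1 h2
    rcases hP.mem_or_mem (hJP hb) with h | h
    · exact nRad_subset_prime E P hP hPE n _ (Set.union_subset hJP (by simpa using h)) hn
    · exact nRad_subset_prime E P hP hPE m _ (Set.union_subset hJP (by simpa using h)) hm
  · intro h
    apply Set.Subset.antisymm
    · intro x hx
      simp only [Erad, Set.mem_iInter]
      rintro P ⟨hP, hPE, hJP⟩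
      exact hJP hx
    · intro x hx
      by_contra hxJ
      have h0 : x ∉ eRad E (J : Set R) := by
        intro hx'
        have e : (J : Set R) ∪ {0} = J := Set.union_eq_self_of_subset_right (by simp)
        exact hxJ (h x 0 0 (by simp) (by rw [e]; exact ⟨hx', hx'⟩))
      obtain ⟨P, hP, hPE, hJP, hxP⟩ := exists_prime E _ x h0
      simp only [Erad, Set.mem_iInter] at hx
      exact hxP (hx P ⟨hP, hPE, hJP⟩)
end
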